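/- For the Souza–Marzari–Vanderbilt functional S_t = ∫_{1BZ} d²k Tr[g_{t,k}], the functional derivative satisfies δS_t/δ[g_{t,k}]_{ij} = δ_{ij}, and hence the general monotonic flow specializes to ∂_t P = α(P ∇²_k P Q̄ + Q̄ ∇²_k P P); along this flow the integrated trace of the quantum metric ∫_{1BZ} Tr[g_{t,k}] d²k is non-increasing in t. -/

import Mathlib

noncomputable section

/-- The finite-dimensional complex Hilbert space `ℂ^d`. -/
abbrev Hsp (d : ℕ) := EuclideanSpace ℂ (Fin d)

/-- Trace of a continuous linear endomorphism. -/
noncomputable def trC {d : ℕ} (T : Hsp d →L[ℂ] Hsp d) : ℂ :=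
  LinearMap.trace ℂ (Hsp d) (T : Hsp d →ₗ[ℂ] Hsp d)

/-- The partial derivative `∂_{k_i} P` of an operator-valued family on `ℝ²`. -/
noncomputable def pd {d : ℕ} (P : (Fin 2 → ℝ) → (Hsp d →L[ℂ] Hsp d))
    (i : Fin 2) (k : Fin 2 → ℝ) : Hsp d →L[ℂ] Hsp d :=
  fderiv ℝ P k (Pi.single i 1)

/-- The momentum-space Laplacian `∇²_k P = ∂²_{k_x} P + ∂²_{k_y} P`. -/
noncomputable def lap {d : ℕ} (P : (Fin 2 → ℝ) → (Hsp d →L[ℂ] Hsp d))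
    (k : Fin 2 → ℝ) : Hsp d →L[ℂ] Hsp d :=
  ∑ i : Fin 2, fderiv ℝ (fun k' => pd P i k') k (Pi.single i 1)

/-- The Brillouin zone (unit torus fundamental domain). -/
def BZ : Set (Fin 2 → ℝ) := Set.Icc 0 1


section helpers

open MeasureTheory

/-- Directional derivative. -/
def DD {E A : Type*} [NormedAddCommGroup E] [NormedSpace ℝ E] [NormedAddCommGroup A]
    [NormedSpace ℝ A] (v : E) (f : E → A) (x : E) : A := fderiv ℝ f x v

section DDlem
variable {E A B : Type*} [NormedAddCommGroup E] [NormedSpace ℝ E] [NormedAddCommGroup A]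
    [NormedSpace ℝ A] [NormedAddCommGroup B] [NormedSpace ℝ B]

lemma DD_smooth {f : E → A} (hf : ContDiff ℝ (⊤ : ℕ∞) f) (v : E) :
    ContDiff ℝ (⊤ : ℕ∞) (DD v f) := by
  unfold DD
  exact (hf.fderiv_right (m := (⊤ : ℕ∞)) (by exact_mod_cast le_rfl)).clm_apply contDiff_const

lemma sm_diff {f : E → A} (hf : ContDiff ℝ (⊤ : ℕ∞) f) : Differentiable ℝ f :=
  hf.differentiable (by simp)

lemma DD_DD {f : E → A} (hf : ContDiff ℝ (⊤ : ℕ∞) f) (v w x : E) :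
    DD v (DD w f) x = fderiv ℝ (fderiv ℝ f) x v w := by
  have h1 : ContDiff ℝ (⊤ : ℕ∞) (fderiv ℝ f) :=
    hf.fderiv_right (m := (⊤ : ℕ∞)) (by exact_mod_cast le_rfl)
  unfold DD
  rw [fderiv_clm_apply (sm_diff h1 x) (differentiableAt_const w)]
  simp

lemma DD_comm {f : E → A} (hf : ContDiff ℝ (⊤ : ℕ∞) f) (v w x : E) :
    DD v (DD w f) x = DD w (DD v f) x := by
  rw [DD_DD hf, DD_DD hf]
  exact (hf.contDiffAt.isSymmSndFDerivAt (by
    rw [minSmoothness_of_isRCLikeNormedField]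
    exact WithTop.coe_le_coe.2 (le_top : (2 : ℕ∞) ≤ ⊤))) v w

lemma DD_clm {f : E → A} (hf : ContDiff ℝ (⊤ : ℕ∞) f) (L : A →L[ℝ] B) (v x : E) :
    DD v (fun y => L (f y)) x = L (DD v f x) := by
  unfold DD
  have := (L.hasFDerivAt (x := f x)).comp x (sm_diff hf x).hasFDerivAt
  have h2 : HasFDerivAt (fun y => L (f y)) (L.comp (fderiv ℝ f x)) x := this
  rw [h2.fderiv]; rfl

lemma DD_shift {f : E → A} (hf : ContDiff ℝ (⊤ : ℕ∞) f) (L : A →L[ℝ] A) (c : E)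
    (h : ∀ x, f (x + c) = L (f x)) (v x : E) :
    DD v f (x + c) = L (DD v f x) := by
  rw [← DD_clm hf]
  unfold DD
  rw [← fderiv_comp_add_right c]
  congr 2
  funext y
  exact h y

lemma DD_sum {ι : Type*} (s : Finset ι) {f : ι → E → A}
    (hf : ∀ i, ContDiff ℝ (⊤ : ℕ∞) (f i)) (v x : E) :
    DD v (fun y => ∑ i ∈ s, f i y) x = ∑ i ∈ s, DD v (f i) x := by
  unfold DD
  rw [fderiv_fun_sum (fun i _ => sm_diff (hf i) x)]
  simp

end DDlem

lemma DD_mul {E A : Type*} [NormedAddCommGroup E] [NormedSpace ℝ E] [NormedRing A]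
    [NormedAlgebra ℝ A] {f g : E → A} (hf : ContDiff ℝ (⊤ : ℕ∞) f)
    (hg : ContDiff ℝ (⊤ : ℕ∞) g) (v x : E) :
    DD v (fun y => f y * g y) x = f x * DD v g x + DD v f x * g x := by
  unfold DD
  rw [fderiv_fun_mul' (sm_diff hf x) (sm_diff hg x)]
  simp

/-- Real part of trace as a real continuous linear map. -/
def tauL (d : ℕ) : (Hsp d →L[ℂ] Hsp d) →L[ℝ] ℝ :=
  Complex.reCLM.comp
    ((LinearMap.toContinuousLinearMap
      ((LinearMap.trace ℂ (Hsp d)).comp (ContinuousLinearMap.coeLM ℂ))).restrictScalars ℝ)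

lemma tauL_apply {d : ℕ} (T : Hsp d →L[ℂ] Hsp d) : tauL d T = (trC T).re := rfl

lemma trC_comm {d : ℕ} (S T : Hsp d →L[ℂ] Hsp d) : trC (S * T) = trC (T * S) :=
  LinearMap.trace_mul_comm ℂ (S : Hsp d →ₗ[ℂ] Hsp d) (T : Hsp d →ₗ[ℂ] Hsp d)

lemma tauL_comm {d : ℕ} (S T : Hsp d →L[ℂ] Hsp d) : tauL d (S * T) = tauL d (T * S) := by
  rw [tauL_apply, tauL_apply, trC_comm]

lemma tauL_pos {d : ℕ} (T : Hsp d →L[ℂ] Hsp d) : 0 ≤ tauL d (star T * T) := by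
  rw [tauL_apply, trC, LinearMap.trace_eq_sum_inner _ (EuclideanSpace.basisFun (Fin d) ℂ),
    Complex.re_sum]
  refine Finset.sum_nonneg fun i _ => ?_
  rw [ContinuousLinearMap.star_eq_adjoint]
  simp only [ContinuousLinearMap.coe_coe, mul_apply_eq_comp]
  rw [ContinuousLinearMap.adjoint_inner_right]
  exact inner_self_nonneg (𝕜 := ℂ)

lemma tauL_PLQ {d : ℕ} (P L Q : Hsp d →L[ℂ] Hsp d) (hP : P * P = P) (hQ : Q * Q = Q)
    (hPs : star P = P) (hQs : star Q = Q) (hL : star L = L) :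
    0 ≤ tauL d (P * L * Q * L) := by
  have h := tauL_pos (Q * L * P)
  have e : star (Q * L * P) * (Q * L * P) = P * (L * Q * L * P) := by
    simp only [star_mul, hPs, hQs, hL]
    calc P * (L * Q) * (Q * L * P) = P * L * (Q * Q) * L * P := by noncomm_ring
      _ = _ := by rw [hQ]; noncomm_ring
  rw [e, tauL_comm] at h
  have e2 : L * Q * L * P * P = (L * Q * L) * P := by rw [mul_assoc _ P P, hP]
  rw [e2, tauL_comm] at h
  simpa only [mul_assoc] using h

/-- Divergence of a periodic field integrates to zero. -/
lemma divg_zero (W : Fin 2 → (Fin 2 → ℝ) → ℝ) (hW : ∀ i, ContDiff ℝ (⊤ : ℕ∞) (W i))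
    (hper : ∀ i k, W i (k + Pi.single i 1) = W i k) :
    ∫ k in BZ, ∑ i, DD (Pi.single i 1) (W i) k = 0 := by
  have h := integral_divergence_of_hasFDerivAt_off_countable' (n := 1) (0 : Fin 2 → ℝ) 1
    (by intro i; simp) W (fun i => fderiv ℝ (W i)) ∅ Set.countable_empty
    (fun i => (hW i).continuous.continuousOn)
    (fun x _ i => (sm_diff (hW i) x).hasFDerivAt)
    (by
      apply Continuous.integrableOn_Icc
      exact continuous_finsetSum _ fun i _ => (DD_smooth (hW i) (Pi.single i 1)).continuous)
  unfold BZ DD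
  refine h.trans ?_
  refine Finset.sum_eq_zero fun i _ => ?_
  rw [sub_eq_zero]
  congr 1
  funext x
  rw [← hper i (Fin.insertNth i ((0 : Fin 2 → ℝ) i) x)]
  congr 1
  funext j
  refine Fin.succAboveCases i ?_ (fun j => ?_) j
  · simp
  · simp

lemma antitone_of_DD (G : ℝ × (Fin 2 → ℝ) → ℝ) (hG : ContDiff ℝ (⊤ : ℕ∞) G)
    (h : ∀ t, ∫ k in BZ, DD ((1 : ℝ), (0 : Fin 2 → ℝ)) G (t, k) ≤ 0) :
    Antitone fun t => ∫ k in BZ, G (t, k) := by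
  intro s t hst
  have hc : Continuous (DD ((1 : ℝ), (0 : Fin 2 → ℝ)) G) := (DD_smooth hG _).continuous
  have hint : ∀ t, IntegrableOn (fun k => G (t, k)) BZ := fun t =>
    Continuous.integrableOn_Icc (hG.continuous.comp (by fun_prop))
  have key : ∀ k, ∫ u in s..t, DD ((1 : ℝ), (0 : Fin 2 → ℝ)) G (u, k) = G (t, k) - G (s, k) := by
    intro k
    apply intervalIntegral.integral_eq_sub_of_hasDerivAt (f := fun u => G (u, k))
    · intro u _
      have h1 : HasDerivAt (fun u : ℝ => (u, k)) ((1 : ℝ), (0 : Fin 2 → ℝ)) u :=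
        (hasDerivAt_id u).prodMk (hasDerivAt_const u k)
      exact (sm_diff hG (u, k)).hasFDerivAt.comp_hasDerivAt u h1
    · exact (hc.comp (by fun_prop)).intervalIntegrable _ _
  have e : (∫ k in BZ, G (t, k)) - ∫ k in BZ, G (s, k)
      = ∫ u in s..t, ∫ k in BZ, DD ((1 : ℝ), (0 : Fin 2 → ℝ)) G (u, k) := by
    rw [← integral_sub (hint t) (hint s)]
    simp_rw [← key]
    rw [intervalIntegral_integral_swap]
    rw [Measure.prod_restrict]
    have : IntegrableOn (DD ((1 : ℝ), (0 : Fin 2 → ℝ)) G) (Set.uIcc s t ×ˢ BZ)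
        ((volume : Measure ℝ).prod volume) := by
      apply ContinuousOn.integrableOn_compact
      · exact isCompact_uIcc.prod isCompact_Icc
      · exact hc.continuousOn
    exact this.mono_set (Set.prod_mono Set.uIoc_subset_uIcc le_rfl)
  have n : ∫ u in s..t, ∫ k in BZ, DD ((1 : ℝ), (0 : Fin 2 → ℝ)) G (u, k) ≤ 0 := by
    rw [← neg_nonneg, ← intervalIntegral.integral_neg]
    exact intervalIntegral.integral_nonneg hst fun u _ => by simpa using h u
  show _ ≤ _
  linarith

/-- slices -/
lemma DD_slice {A : Type*} [NormedAddCommGroup A] [NormedSpace ℝ A]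
    {f : ℝ × (Fin 2 → ℝ) → A} (hf : ContDiff ℝ (⊤ : ℕ∞) f) (t : ℝ) (v k : Fin 2 → ℝ) :
    DD v (fun k' => f (t, k')) k = DD ((0 : ℝ), v) f (t, k) := by
  unfold DD
  have h1 := (sm_diff hf (t, k)).hasFDerivAt.comp k (hasFDerivAt_prodMk_right (𝕜 := ℝ) t k)
  have h2 : HasFDerivAt (fun k' => f (t, k')) _ k := h1
  rw [h2.fderiv]
  simp

/-- Abstract energy decay. -/
lemma main_aux (d : ℕ) (f : ℝ × (Fin 2 → ℝ) → (Hsp d →L[ℂ] Hsp d))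
    (hf : ContDiff ℝ (⊤ : ℕ∞) f)
    (Φ : Fin 2 → (Hsp d →L[ℂ] Hsp d) →L[ℝ] (Hsp d →L[ℂ] Hsp d))
    (hΦ : ∀ i S T, tauL d (Φ i S * Φ i T) = tauL d (S * T))
    (hper : ∀ i x, f (x + ((0 : ℝ), Pi.single i 1)) = Φ i (f x))
    (hpos : ∀ x, 0 ≤ tauL d (DD ((1 : ℝ), (0 : Fin 2 → ℝ)) f x *
      ∑ i, DD ((0 : ℝ), Pi.single i 1) (DD ((0 : ℝ), Pi.single i 1) f) x)) :
    Antitone fun t => ∫ k in BZ, ∑ i : Fin 2, (1 / 2 : ℝ) *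
      tauL d (DD ((0 : ℝ), Pi.single i 1) f (t, k) * DD ((0 : ℝ), Pi.single i 1) f (t, k)) := by
  have hτ : ContDiff ℝ (⊤ : ℕ∞) (tauL d) := (tauL d).contDiff
  have hD := fun v => DD_smooth hf v
  have hDm : ∀ v w, ContDiff ℝ (⊤ : ℕ∞) (fun x => DD v f x * DD w f x) :=
    fun v w => (hD v).mul (hD w)
  have hτm : ∀ v w, ContDiff ℝ (⊤ : ℕ∞) (fun x => tauL d (DD v f x * DD w f x)) :=
    fun v w => hτ.comp (hDm v w)
  have hs : ∀ i : Fin 2, ContDiff ℝ (⊤ : ℕ∞) (fun x => (1 / 2 : ℝ) *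
      tauL d (DD ((0 : ℝ), Pi.single i 1) f x * DD ((0 : ℝ), Pi.single i 1) f x)) :=
    fun i => contDiff_const.mul (hτm _ _)
  refine antitone_of_DD (fun x => ∑ i : Fin 2, (1 / 2 : ℝ) *
      tauL d (DD ((0 : ℝ), Pi.single i 1) f x * DD ((0 : ℝ), Pi.single i 1) f x))
      (ContDiff.sum fun i _ => hs i) ?_
  intro t
  have hW : ∀ i : Fin 2, ContDiff ℝ (⊤ : ℕ∞) (fun k : Fin 2 → ℝ =>
      tauL d (DD ((1 : ℝ), (0 : Fin 2 → ℝ)) f (t, k) * DD ((0 : ℝ), Pi.single i 1) f (t, k))) :=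
    fun i => (hτm _ _).comp (contDiff_const.prodMk contDiff_id)
  have h0 := divg_zero (fun i k => tauL d (DD ((1 : ℝ), (0 : Fin 2 → ℝ)) f (t, k) *
      DD ((0 : ℝ), Pi.single i 1) f (t, k))) hW (by
      intro i k
      have e : ((t, k + Pi.single i 1) : ℝ × (Fin 2 → ℝ)) = (t, k) + ((0 : ℝ), Pi.single i 1) := by
        simp
      simp only [e, DD_shift hf (Φ i) _ (hper i), hΦ])
  have ptw : ∀ k, DD ((1 : ℝ), (0 : Fin 2 → ℝ)) (fun x => ∑ i : Fin 2, (1 / 2 : ℝ) *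
      tauL d (DD ((0 : ℝ), Pi.single i 1) f x * DD ((0 : ℝ), Pi.single i 1) f x)) (t, k)
      = (∑ i, DD (Pi.single i 1) (fun k => tauL d (DD ((1 : ℝ), (0 : Fin 2 → ℝ)) f (t, k) *
      DD ((0 : ℝ), Pi.single i 1) f (t, k))) k) -
      tauL d (DD ((1 : ℝ), (0 : Fin 2 → ℝ)) f (t, k) *
      ∑ i, DD ((0 : ℝ), Pi.single i 1) (DD ((0 : ℝ), Pi.single i 1) f) (t, k)) := by
    intro k
    rw [DD_sum _ hs, Finset.mul_sum, map_sum, ← Finset.sum_sub_distrib]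
    refine Finset.sum_congr rfl fun i _ => ?_
    rw [DD_slice (hτm _ _), DD_clm (hDm _ _), DD_mul (hD _) (hD _), map_add,
      DD_comm hf (0, Pi.single i 1) (1, 0)]
    have := DD_mul (f := fun _ => (1 / 2 : ℝ)) contDiff_const
      (hτm (0, Pi.single i 1) (0, Pi.single i 1)) (1, 0) (t, k)
    rw [this, DD_clm (hDm _ _), DD_mul (hD _) (hD _), map_add]
    have c : DD ((1 : ℝ), (0 : Fin 2 → ℝ)) (fun _ => (1 / 2 : ℝ)) (t, k) = 0 := by
      simp [DD]
    rw [c, tauL_comm (DD (0, Pi.single i 1) f (t, k))]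
    ring
  simp_rw [ptw]
  have cont1 : Continuous fun k => ∑ i, DD (Pi.single i 1) (fun k => tauL d
      (DD ((1 : ℝ), (0 : Fin 2 → ℝ)) f (t, k) * DD ((0 : ℝ), Pi.single i 1) f (t, k))) k :=
    continuous_finsetSum _ fun i _ => (DD_smooth (hW i) _).continuous
  have cont2 : Continuous fun k => tauL d (DD ((1 : ℝ), (0 : Fin 2 → ℝ)) f (t, k) *
      ∑ i, DD ((0 : ℝ), Pi.single i 1) (DD ((0 : ℝ), Pi.single i 1) f) (t, k)) := by
    have : Continuous fun x => tauL d (DD ((1 : ℝ), (0 : Fin 2 → ℝ)) f x *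
      ∑ i, DD ((0 : ℝ), Pi.single i 1) (DD ((0 : ℝ), Pi.single i 1) f) x) :=
      (tauL d).continuous.comp ((hD _).continuous.mul
        (continuous_finsetSum _ fun i _ => (DD_smooth (hD _) _).continuous))
    exact this.comp (by fun_prop)
  have i1 := cont1.integrableOn_Icc (μ := volume) (a := 0) (b := 1)
  have i2 := cont2.integrableOn_Icc (μ := volume) (a := 0) (b := 1)
  change IntegrableOn _ BZ _ at i1
  change IntegrableOn _ BZ _ at i2
  rw [integral_sub i1 i2, h0]
  rw [zero_sub, neg_nonpos]
  exact integral_nonneg_of_ae (Filter.Eventually.of_forall fun k => hpos (t, k))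

end helpers

/-- Along the Souza–Marzari–Vanderbilt flow `∂_t P = α(P ∇²_k P Q̄ + Q̄ ∇²_k P P)`
(the specialization of the general monotonic flow to `S_t = ∫ Tr[g_{t,k}]`, whose
functional derivative is `δ_ij`), the integrated trace of the quantum metric
`∫_{1BZ} Tr[g_{t,k}] d²k` is non-increasing in `t`. -/
theorem smv_flow_trace_nonincreasing (d : ℕ) (α : ℝ) (hα : 0 < α)
    (P Qb : ℝ → (Fin 2 → ℝ) → (Hsp d →L[ℂ] Hsp d))
    (V : Fin 2 → (Hsp d →L[ℂ] Hsp d))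
    (hPsmooth : ContDiff ℝ (⊤ : ℕ∞) (Function.uncurry P))
    (hQsmooth : ContDiff ℝ (⊤ : ℕ∞) (Function.uncurry Qb))
    (hPproj : ∀ t k, P t k ∘L P t k = P t k ∧
      ContinuousLinearMap.adjoint (P t k) = P t k)
    (hQproj : ∀ t k, Qb t k ∘L Qb t k = Qb t k ∧
      ContinuousLinearMap.adjoint (Qb t k) = Qb t k)
    (horth : ∀ t k, P t k ∘L Qb t k = 0 ∧ Qb t k ∘L P t k = 0)
    (hVunitary : ∀ i, V i ∘L ContinuousLinearMap.adjoint (V i) = 1 ∧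
      ContinuousLinearMap.adjoint (V i) ∘L V i = 1)
    (hPper : ∀ t k (i : Fin 2),
      P t (k + Pi.single i 1) = V i ∘L P t k ∘L ContinuousLinearMap.adjoint (V i))
    (hflow : ∀ t k, deriv (fun t' => P t' k) t =
      α • (P t k ∘L lap (P t) k ∘L Qb t k + Qb t k ∘L lap (P t) k ∘L P t k)) :
    Antitone fun t => ∫ k in BZ,
      ∑ i : Fin 2, ((1 / 2 : ℂ) * trC (pd (P t) i k ∘L pd (P t) i k)).re := by
  set f := Function.uncurry P with hfdef
  have hpd : ∀ t i k, pd (P t) i k = DD ((0 : ℝ), Pi.single i 1) f (t, k) := fun t i k =>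
    DD_slice hPsmooth t (Pi.single i 1) k
  have hlap : ∀ t k, lap (P t) k =
      ∑ i, DD ((0 : ℝ), Pi.single i 1) (DD ((0 : ℝ), Pi.single i 1) f) (t, k) := by
    intro t k
    unfold lap
    simp only [hpd]
    exact Finset.sum_congr rfl fun i _ =>
      DD_slice (DD_smooth hPsmooth _) t (Pi.single i 1) k
  have hdt : ∀ t k, deriv (fun t' => P t' k) t = DD ((1 : ℝ), (0 : Fin 2 → ℝ)) f (t, k) := by
    intro t k
    have h1 : HasDerivAt (fun u : ℝ => (u, k)) ((1 : ℝ), (0 : Fin 2 → ℝ)) t :=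
      (hasDerivAt_id t).prodMk (hasDerivAt_const t k)
    exact ((sm_diff hPsmooth (t, k)).hasFDerivAt.comp_hasDerivAt t h1).deriv
  have hst : ∀ x, star (f x) = f x := fun x => (hPproj x.1 x.2).2
  have hDst : ∀ g : ℝ × (Fin 2 → ℝ) → (Hsp d →L[ℂ] Hsp d), ContDiff ℝ (⊤ : ℕ∞) g →
      (∀ x, star (g x) = g x) → ∀ v x, star (DD v g x) = DD v g x := by
    intro g hg hs v x
    have := DD_clm hg ((starL' ℝ : (Hsp d →L[ℂ] Hsp d) ≃L[ℝ] (Hsp d →L[ℂ] Hsp d)) :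
      (Hsp d →L[ℂ] Hsp d) →L[ℝ] (Hsp d →L[ℂ] Hsp d)) v x
    simp only [ContinuousLinearEquiv.coe_coe, starL'_apply, hs] at this
    exact this.symm
  have hLst : ∀ t k, star (lap (P t) k) = lap (P t) k := by
    intro t k
    have hh := fun i : Fin 2 => hDst _ (DD_smooth hPsmooth ((0 : ℝ), Pi.single i 1))
      (hDst _ hPsmooth hst _) ((0 : ℝ), Pi.single i 1) (t, k)
    rw [hlap, Fin.sum_univ_two]
    have sa : ∀ S T : Hsp d →L[ℂ] Hsp d, star S = S → star T = T → star (S + T) = S + T := by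
      intro S T hS hT
      rw [ContinuousLinearMap.star_eq_adjoint] at *
      rw [map_add, hS, hT]
    exact sa _ _ (hh 0) (hh 1)
  have key := main_aux d f hPsmooth
    (fun i => (ContinuousLinearMap.mul ℝ _ (V i)).comp
      ((ContinuousLinearMap.mul ℝ (Hsp d →L[ℂ] Hsp d)).flip (star (V i))))
    (by
      intro i S T
      have h2 : star (V i) * V i = 1 := (hVunitary i).2
      simp only [ContinuousLinearMap.comp_apply, ContinuousLinearMap.flip_apply,
        ContinuousLinearMap.mul_apply']
      have e : V i * (S * star (V i)) * (V i * (T * star (V i)))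
          = V i * (S * T * star (V i)) := by
        calc _ = V i * S * (star (V i) * V i) * T * star (V i) := by noncomm_ring
          _ = _ := by rw [h2]; noncomm_ring
      rw [e, tauL_comm, mul_assoc (S * T), h2, mul_one])
    (by
      intro i x
      have := hPper x.1 x.2 i
      have e : f (x + ((0 : ℝ), Pi.single i 1)) = P x.1 (x.2 + Pi.single i 1) := by
        simp [hfdef, Function.uncurry]
      rw [e]
      exact this)
    (by
      rintro ⟨t, k⟩
      rw [← hdt, ← hlap, hflow]
      have hP1 : P t k * P t k = P t k := (hPproj t k).1
      have hQ1 : Qb t k * Qb t k = Qb t k := (hQproj t k).1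
      have a := tauL_PLQ (P t k) (lap (P t) k) (Qb t k) hP1 hQ1 (hPproj t k).2
        (hQproj t k).2 (hLst t k)
      have b := tauL_PLQ (Qb t k) (lap (P t) k) (P t k) hQ1 hP1 (hQproj t k).2
        (hPproj t k).2 (hLst t k)
      have e : (α • (P t k ∘L lap (P t) k ∘L Qb t k + Qb t k ∘L lap (P t) k ∘L P t k))
          * lap (P t) k = α • (P t k * lap (P t) k * Qb t k * lap (P t) k +
            Qb t k * lap (P t) k * P t k * lap (P t) k) := by
        rw [← add_mul]
        rfl
      rw [e, map_smul, map_add, smul_eq_mul]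
      positivity)
  have fin : ∀ t k, (∑ i : Fin 2, ((1 / 2 : ℂ) * trC (pd (P t) i k ∘L pd (P t) i k)).re)
      = ∑ i : Fin 2, (1 / 2 : ℝ) * tauL d (DD ((0 : ℝ), Pi.single i 1) f (t, k) *
        DD ((0 : ℝ), Pi.single i 1) f (t, k)) := by
    intro t k
    refine Finset.sum_congr rfl fun i _ => ?_
    rw [hpd, tauL_apply]
    have : (1 / 2 : ℂ) = ((1 / 2 : ℝ) : ℂ) := by push_cast; rfl
    rw [this, Complex.re_ofReal_mul]
    rfl
  simp_rw [fin]
  exact key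

end
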